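/- Consider a Fragile CPR game with strictly increasing rate of return r in which every player has α_i = 1 and k_i ≥ 1. Then for any tax rates t_2 < t_1 < t̄, the PNE utilizations satisfy x^{t_1}_NE ≤ x^{t_2}_NE; that is, utilization is monotonically non-increasing in the tax rate. -/

import Mathlib

/-!
The proof is a discrete revealed-preference argument. Suppose the equilibrium utilizations satisfy
`X₂ < X₁`. Some player `i` then invests strictly more at the higher tax `t₁` than at `t₂`. Since she
invests at `t₁`, her rate of return `h(X₁, t₁)` is nonnegative, hence `h(X₁, t₂) > 0`; so she must
also invest at `t₂`, for otherwise moving from `0` to `X₁ - X₂` would be profitable.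
Consequently `r > t` at both equilibria, where the rate of return has the smooth form
`h(x, t) = (r x - t)(1 - p x) - k (1 + t) p x` (`activeRate`).

Compare a small reduction `δ` of her investment at `t₁` with a small increase `δ` at `t₂`. The
equilibrium conditions read, with `D₁ = h(X₁, t₁) - h(X₁ - δ, t₁)` and
`D₂ = h(X₂ + δ, t₂) - h(X₂, t₂)`,
`0 ≤ δ h(X₁ - δ, t₁) + x₁ D₁` and `δ h(X₂ + δ, t₂) + x₂ D₂ ≤ 0`.
The second one forces `D₂ ≤ 0`. Because `k ≥ 1`, increments of `h` in `x` decrease with `t`, and `h`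
is concave in `x` (`concaveOn_activeRate`), so `D₁ ≤ D₂ ≤ 0` and
`h(X₁ - δ, t₁) < h(X₂ + δ, t₂)`. As `x₂ < x₁`, the two conditions contradict each other.
-/

open Real Set

noncomputable section

/-- Effective rate of return of a player with sensitivity `α` and loss aversion `k`,
at utilization `x` and tax rate `t`. -/
def effRate (p r : ℝ → ℝ) (α k x t : ℝ) : ℝ :=
  if 0 ≤ r x - t then
    (r x - t) ^ α * (1 - p x) - k * (1 + t) ^ α * p x
  else
    -(k * ((t - r x) ^ α * (1 - p x) + (1 + t) ^ α * p x))

/-- Partial derivative of the effective rate of return in the utilization. -/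
def effRateDx (p r : ℝ → ℝ) (α k x t : ℝ) : ℝ :=
  deriv (fun z => effRate p r α k z t) x

/-- `g_i(x,t) = α_i f_i(x,t) / (−f_{i,x}(x,t))`. -/
def gFun (p r : ℝ → ℝ) (α k x t : ℝ) : ℝ :=
  α * effRate p r α k x t / (-effRateDx p r α k x t)

/-- Standing assumptions on the failure probability `p`. -/
structure FailureProb (p : ℝ → ℝ) : Prop where
  convexOn : ConvexOn ℝ (Ico (0:ℝ) 1) p
  strictMonoOn : StrictMonoOn p (Ico (0:ℝ) 1)
  contDiffOn : ContDiffOn ℝ 1 p (Ico (0:ℝ) 1)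
  eq_one : ∀ x : ℝ, 1 ≤ x → p x = 1
  mem_unit : ∀ x : ℝ, p x ∈ Icc (0:ℝ) 1

/-- Standing assumptions on the rate of return `r`. -/
structure RateOfReturn (r : ℝ → ℝ) : Prop where
  concaveOn : ConcaveOn ℝ (Icc (0:ℝ) 1) r
  pos : ∀ x ∈ Icc (0:ℝ) 1, 0 < r x
  strictMonoOrAnti : StrictMonoOn r (Icc (0:ℝ) 1) ∨ StrictAntiOn r (Icc (0:ℝ) 1)
  contDiffOn : ContDiffOn ℝ 1 r (Icc (0:ℝ) 1)

/-- `S_t`: the set of utilizations `x ∈ [0,1]` with `r(x) − t ≥ 0`. -/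
def St (r : ℝ → ℝ) (t : ℝ) : Set ℝ := {x | x ∈ Icc (0:ℝ) 1 ∧ 0 ≤ r x - t}

/-- The maximal tax rate `t̄` of the game. -/
def tbar {ι : Type*} [Fintype ι] (p r : ℝ → ℝ) (α k : ι → ℝ) : ℝ :=
  sSup {t : ℝ | 0 ≤ t ∧ ∃ i : ι, ∃ x ∈ Icc (0:ℝ) 1, 0 < effRate p r (α i) (k i) x t}

/-- The maximal tax rate `t̄_i` of a single player. -/
def tbarI (p r : ℝ → ℝ) (α k : ℝ) : ℝ :=
  sSup {t : ℝ | 0 ≤ t ∧ ∃ x ∈ St r t, 0 < effRate p r α k x t}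

/-- `a_t` for a strictly increasing rate of return. -/
def aT (r : ℝ → ℝ) (t : ℝ) : ℝ :=
  if t ≤ r 0 then 0 else sInf {x | x ∈ Icc (0:ℝ) 1 ∧ r x = t}

/-- The threshold `y^t_i` for a strictly decreasing rate of return. -/
def yT (p r : ℝ → ℝ) (α k t : ℝ) : ℝ :=
  if effRate p r α k 0 t ≤ 0 then 0
  else sInf {x | x ∈ St r t ∧ effRate p r α k x t = 0}

/-- `ĝ_i(x,t)`, for a strictly decreasing rate of return. -/
def gHat (p r : ℝ → ℝ) (α k x t : ℝ) : ℝ :=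
  if x < yT p r α k t then gFun p r α k x t else 0

/-- The function `q_i(x,t)` for strictly increasing rate of return. -/
def qFun (p r : ℝ → ℝ) (α x t : ℝ) : ℝ :=
  deriv r x * (1 - p x) ^ 2 /
      ((r x + 1) * deriv p x - α * deriv r x * (1 - p x) * p x) *
    ((1 + t) / (r x - t)) ^ (1 - α)

/-- `b` is a best response of a player (parameters `α`, `k`) to the others' total
investment `xbar` at tax rate `t`. -/
def IsBestResponse (p r : ℝ → ℝ) (α k t xbar b : ℝ) : Prop :=
  b ∈ Icc (0:ℝ) 1 ∧
    ∀ y ∈ Icc (0:ℝ) 1,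
      y ^ α * effRate p r α k (y + xbar) t ≤ b ^ α * effRate p r α k (b + xbar) t

/-- Pure Nash equilibrium of the Fragile CPR game at tax rate `t`. -/
def IsPNE {ι : Type*} [Fintype ι] [DecidableEq ι] (p r : ℝ → ℝ) (α k : ι → ℝ)
    (t : ℝ) (x : ι → ℝ) : Prop :=
  (∀ i, x i ∈ Icc (0:ℝ) 1) ∧
    ∀ i, ∀ y ∈ Icc (0:ℝ) 1,
      y ^ α i * effRate p r (α i) (k i) (y + ∑ j ∈ Finset.univ.erase i, x j) t ≤
        x i ^ α i * effRate p r (α i) (k i) (x i + ∑ j ∈ Finset.univ.erase i, x j) t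

/-- `y` is the threshold `y^t_i` of a player, as defined in the paper for the
increasing and decreasing cases of the rate of return. -/
def IsThresholdY (p r : ℝ → ℝ) (α k t y : ℝ) : Prop :=
  (StrictMonoOn r (Icc (0:ℝ) 1) →
    ((∀ x ∈ St r t, effRate p r α k x t ≤ 0) → y = 0) ∧
    ((∃ x ∈ St r t, 0 < effRate p r α k x t) →
      ∃ z ∈ St r t, IsMaxOn (fun x => effRate p r α k x t) (St r t) z ∧
        y ∈ Ioo z 1 ∧ effRate p r α k y t = 0)) ∧
  (StrictAntiOn r (Icc (0:ℝ) 1) →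
    ((effRate p r α k 0 t ≤ 0) → y = 0) ∧
    ((0 < effRate p r α k 0 t) → y ∈ St r t ∧ effRate p r α k y t = 0))

/-- Pure Nash equilibrium under player-specific tax sensitivities `γ_i`
(all players have `α = 1` and common loss aversion `k`). -/
def IsPNEgamma {ι : Type*} [Fintype ι] [DecidableEq ι] (p r : ℝ → ℝ) (k t : ℝ)
    (γ : ι → ℝ) (x : ι → ℝ) : Prop :=
  (∀ i, x i ∈ Icc (0:ℝ) 1) ∧
    ∀ i, ∀ y ∈ Icc (0:ℝ) 1,
      y * effRate p r 1 k (y + ∑ j ∈ Finset.univ.erase i, x j) (γ i * t) ≤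
        x i * effRate p r 1 k (x i + ∑ j ∈ Finset.univ.erase i, x j) (γ i * t)

/-- The effective rate of return for `α = 1` in the region `t ≤ r x`. -/
def activeRate (p r : ℝ → ℝ) (k t x : ℝ) : ℝ :=
  (r x - t) * (1 - p x) - k * (1 + t) * p x

lemma effRate_one_eq {p r : ℝ → ℝ} {k x t : ℝ} (h : t ≤ r x) :
    effRate p r 1 k x t = activeRate p r k t x := by
  simp [effRate, activeRate, h]

lemma FailureProb.pos {p : ℝ → ℝ} (hp : FailureProb p) {x : ℝ} (hx : 0 < x) : 0 < p x := by
  rcases lt_or_ge x 1 with h | h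
  · exact (hp.mem_unit 0).1.trans_lt (hp.strictMonoOn ⟨le_rfl, one_pos⟩ ⟨hx.le, h⟩ hx)
  · rw [hp.eq_one x h]; exact one_pos

/-- A positive utilization with nonnegative return lies below the failure point `1` and in the
region where the rate of return exceeds the tax. -/
lemma lt_of_effRate_nonneg {p r : ℝ → ℝ} (hp : FailureProb p) {k t x : ℝ}
    (hk : 1 ≤ k) (ht : 0 ≤ t) (hx : 0 < x) (h : 0 ≤ effRate p r 1 k x t) :
    x < 1 ∧ t < r x := by
  have hpos := hp.pos hx
  have hle := (hp.mem_unit x).2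
  have hkp : 0 < k * (1 + t) * p x := by positivity
  constructor
  · by_contra! hx1
    have hone := hp.eq_one x hx1
    unfold effRate at h
    rw [hone] at h hkp
    simp only [rpow_one, sub_self, mul_zero] at h
    split_ifs at h <;> linarith
  · by_contra! hr
    have hprod : 0 ≤ k * ((t - r x) * (1 - p x)) :=
      mul_nonneg (by linarith) (mul_nonneg (by linarith) (by linarith))
    unfold effRate at h
    simp only [rpow_one] at h
    split_ifs at h with hc
    · have : r x - t = 0 := by linarith
      rw [this] at h
      linarith
    · linarith

/-- Where `r ≥ t`, the product `(r - t)(1 - p)` is concave, being a product of nonnegative concave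
functions varying in opposite directions. -/
lemma concaveOn_activeRate {p r : ℝ → ℝ} (hp : FailureProb p) (hr : RateOfReturn r)
    (hinc : StrictMonoOn r (Icc (0:ℝ) 1)) {k t a b : ℝ} (hk : 1 ≤ k) (ht : 0 ≤ t)
    (ha : 0 ≤ a) (hb : b < 1) (hra : t ≤ r a) :
    ConcaveOn ℝ (Icc a b) (activeRate p r k t) := by
  have hs1 : Icc a b ⊆ Icc (0:ℝ) 1 := fun x hx => ⟨ha.trans hx.1, hx.2.trans hb.le⟩
  have hs2 : Icc a b ⊆ Ico (0:ℝ) 1 := fun x hx => ⟨ha.trans hx.1, hx.2.trans_lt hb⟩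
  have hpc : ConvexOn ℝ (Icc a b) p := hp.convexOn.subset hs2 (convex_Icc a b)
  have hrc : ConcaveOn ℝ (Icc a b) r := hr.concaveOn.subset hs1 (convex_Icc a b)
  have hf : ConcaveOn ℝ (Icc a b) (fun x => r x - t) := hrc.sub (convexOn_const t (convex_Icc a b))
  have hg : ConcaveOn ℝ (Icc a b) (fun x => 1 - p x) :=
    (concaveOn_const 1 (convex_Icc a b)).sub hpc
  have hmul : ConcaveOn ℝ (Icc a b) ((fun x => r x - t) * (fun x => 1 - p x)) := by
    refine hf.mul hg (fun x hx => ?_) (fun x hx => ?_) ?_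
    · have := hinc.monotoneOn (hs1 ⟨le_rfl, hx.1.trans hx.2⟩) (hs1 hx) hx.1
      linarith
    · linarith [(hp.mem_unit x).2]
    · intro x hx y hy hxy
      have hlt : y < x := by
        by_contra! hle
        have := hp.strictMonoOn.monotoneOn (hs2 hx) (hs2 hy) hle
        simp only at hxy
        linarith
      have := hinc (hs1 hy) (hs1 hx) hlt
      simp only
      linarith
  have hkp : ConvexOn ℝ (Icc a b) (fun x => (k * (1 + t)) • p x) :=
    hpc.smul (by positivity)
  exact hmul.sub hkp

/-- Concavity compares the increment over the last stretch of length `δ` with that over the first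
one. -/
lemma ConcaveOn.increment_le {f : ℝ → ℝ} {a b δ : ℝ} (hf : ConcaveOn ℝ (Icc a b) f)
    (hδ : 0 < δ) (hab : a + δ < b) : f b - f (b - δ) ≤ f (a + δ) - f a := by
  have hd : 0 < b - a := by linarith
  have hl0 : 0 ≤ δ / (b - a) := by positivity
  have hl1 : 0 ≤ 1 - δ / (b - a) := by
    rw [sub_nonneg, div_le_one hd]; linarith
  have hA : a ∈ Icc a b := ⟨le_rfl, by linarith⟩
  have hB : b ∈ Icc a b := ⟨by linarith, le_rfl⟩
  have e1 := hf.2 hA hB hl1 hl0 (by ring)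
  have e2 := hf.2 hA hB hl0 hl1 (by ring)
  simp only [smul_eq_mul] at e1 e2
  have c1 : (1 - δ / (b - a)) * a + δ / (b - a) * b = a + δ := by field_simp; ring
  have c2 : δ / (b - a) * a + (1 - δ / (b - a)) * b = b - δ := by field_simp; ring
  rw [c1] at e1
  rw [c2] at e2
  linarith

lemma ConcaveOn.le_of_first_decrease {f : ℝ → ℝ} {a c b : ℝ} (hf : ConcaveOn ℝ (Icc a b) f)
    (hac : a < c) (hcb : c < b) (h : f c ≤ f a) : f b ≤ f c := by
  have := hf.slope_anti_adjacent ⟨le_rfl, by linarith⟩ ⟨by linarith, le_rfl⟩ hac hcb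
  have h2 : (f c - f a) / (c - a) ≤ 0 := div_nonpos_of_nonpos_of_nonneg (by linarith) (by linarith)
  have h3 := this.trans h2
  rw [div_le_iff₀ (by linarith)] at h3
  linarith

/-- The comparison of the two equilibrium conditions of a single player: she invests `u₁` of the
total `X₁` at tax `t₁` and `u₂ < u₁` of the total `X₂` at tax `t₂ < t₁`. -/
lemma utilization_le_of_bestResponse {p r : ℝ → ℝ} (hp : FailureProb p) (hr : RateOfReturn r)
    (hinc : StrictMonoOn r (Icc (0:ℝ) 1)) {k t1 t2 X1 X2 u1 u2 : ℝ} (hk : 1 ≤ k)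
    (ht2 : 0 ≤ t2) (h21 : t2 < t1) (hu2 : 0 ≤ u2) (hu : u2 < u1) (hu1 : u1 ≤ 1) (hX2 : u2 ≤ X2)
    (hX1 : u1 ≤ X1)
    (hb1 : ∀ y ∈ Icc (0:ℝ) 1, y * effRate p r 1 k (y + (X1 - u1)) t1 ≤ u1 * effRate p r 1 k X1 t1)
    (hb2 : ∀ y ∈ Icc (0:ℝ) 1,
      y * effRate p r 1 k (y + (X2 - u2)) t2 ≤ u2 * effRate p r 1 k X2 t2) :
    X1 ≤ X2 := by
  by_contra! hX
  have hu1pos : 0 < u1 := by linarith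
  have hX1pos : 0 < X1 := by linarith
  have hf1 : 0 ≤ effRate p r 1 k X1 t1 := by
    have := hb1 0 ⟨le_rfl, zero_le_one⟩
    rw [zero_mul] at this
    exact nonneg_of_mul_nonneg_right this hu1pos
  obtain ⟨hX1lt, hr1⟩ := lt_of_effRate_nonneg hp hk (by linarith) hX1pos hf1
  have key : ∀ x, activeRate p r k t1 x < activeRate p r k t2 x := by
    intro x
    have hdiff : activeRate p r k t2 x - activeRate p r k t1 x
        = (t1 - t2) * (1 + (k - 1) * p x) := by unfold activeRate; ring
    have : 0 ≤ (k - 1) * p x := mul_nonneg (by linarith) (hp.mem_unit x).1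
    have : 0 < (t1 - t2) * (1 + (k - 1) * p x) := mul_pos (by linarith) (by linarith)
    linarith
  have hf12 : 0 < effRate p r 1 k X1 t2 := by
    rw [effRate_one_eq hr1.le] at hf1
    rw [effRate_one_eq (by linarith)]
    exact hf1.trans_lt (key X1)
  have hu2pos : 0 < u2 := by
    by_contra! hcon
    have h0 : u2 = 0 := le_antisymm hcon hu2
    have := hb2 (X1 - X2) ⟨by linarith, by linarith⟩
    rw [h0, zero_mul, sub_zero, sub_add_cancel] at this
    have := mul_pos (sub_pos.2 hX) hf12
    linarith
  have hX2pos : 0 < X2 := by linarith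
  have hf2 : 0 ≤ effRate p r 1 k X2 t2 := by
    have := hb2 0 ⟨le_rfl, zero_le_one⟩
    rw [zero_mul] at this
    exact nonneg_of_mul_nonneg_right this hu2pos
  obtain ⟨hX2lt, hr2⟩ := lt_of_effRate_nonneg hp hk ht2 hX2pos hf2
  -- By continuity of `r`, the inequality `r > t₁` persists slightly below `X₁`.
  obtain ⟨ε, hε, hεr⟩ : ∃ ε > 0, ∀ x ∈ Icc (0:ℝ) 1, |x - X1| < ε → t1 < r x := by
    have hc := hr.contDiffOn.continuousOn X1 ⟨hX1pos.le, hX1lt.le⟩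
    have hev := hc.eventually (lt_mem_nhds hr1)
    obtain ⟨ε, hε, hsub⟩ := Metric.mem_nhdsWithin_iff.1 hev
    exact ⟨ε, hε, fun x hx hd => hsub ⟨by simpa [Real.dist_eq] using hd, hx⟩⟩
  obtain ⟨δ, hδ, hδm⟩ : ∃ δ, 0 < δ ∧ δ < min (min ε ((X1 - X2) / 2)) (u1 - u2) :=
    exists_between (lt_min (lt_min hε (by linarith)) (by linarith))
  obtain ⟨hδ12, hδu⟩ := lt_min_iff.1 hδm
  obtain ⟨hδε, hδX⟩ := lt_min_iff.1 hδ12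
  have hr1' : t1 < r (X1 - δ) := by
    refine hεr _ ⟨by linarith, by linarith⟩ ?_
    rw [abs_lt]; constructor <;> linarith
  have hr2' : t2 < r (X2 + δ) :=
    hr2.trans (hinc ⟨hX2pos.le, hX2lt.le⟩ ⟨by linarith, by linarith⟩ (by linarith))
  have A := hb1 (u1 - δ) ⟨by linarith, by linarith⟩
  have B := hb2 (u2 + δ) ⟨by linarith, by linarith⟩
  rw [show u1 - δ + (X1 - u1) = X1 - δ by ring, effRate_one_eq hr1'.le,
    effRate_one_eq hr1.le] at A
  rw [show u2 + δ + (X2 - u2) = X2 + δ by ring, effRate_one_eq hr2'.le,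
    effRate_one_eq hr2.le] at B
  rw [effRate_one_eq hr2.le] at hf2
  have hconc := concaveOn_activeRate hp hr hinc hk ht2 hX2pos.le hX1lt hr2.le
  have hD2 : activeRate p r k t2 (X2 + δ) ≤ activeRate p r k t2 X2 := by
    by_contra! hlt
    nlinarith [mul_pos hu2pos (sub_pos.2 hlt), mul_pos hδ (hf2.trans_lt hlt)]
  have hinc2 := hconc.increment_le hδ (by linarith)
  have hdec : activeRate p r k t2 (X1 - δ) ≤ activeRate p r k t2 (X2 + δ) :=
    (hconc.subset (Icc_subset_Icc_right (by linarith)) (convex_Icc _ _)).le_of_first_decrease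
      (by linarith) (by linarith) hD2
  -- The cross difference equals `-(t₁ - t₂)(k - 1)` times an increment of `p`; here `1 ≤ k` matters.
  have hcross : activeRate p r k t1 X1 - activeRate p r k t1 (X1 - δ)
      ≤ activeRate p r k t2 X1 - activeRate p r k t2 (X1 - δ) := by
    have hpm : p (X1 - δ) ≤ p X1 :=
      hp.strictMonoOn.monotoneOn ⟨by linarith, by linarith⟩ ⟨hX1pos.le, hX1lt⟩ (by linarith)
    have : 0 ≤ (t1 - t2) * (k - 1) * (p X1 - p (X1 - δ)) :=
      mul_nonneg (mul_nonneg (by linarith) (by linarith)) (by linarith)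
    unfold activeRate
    linarith
  have hk1 := key (X1 - δ)
  have h1 : (u1 - u2) * (activeRate p r k t1 X1 - activeRate p r k t1 (X1 - δ)) ≤ 0 :=
    mul_nonpos_of_nonneg_of_nonpos (by linarith) (by linarith)
  have h2 : u2 * (activeRate p r k t1 X1 - activeRate p r k t1 (X1 - δ))
      ≤ u2 * (activeRate p r k t2 (X2 + δ) - activeRate p r k t2 X2) :=
    mul_le_mul_of_nonneg_left (by linarith) hu2
  have h3 : δ * activeRate p r k t1 (X1 - δ) < δ * activeRate p r k t2 (X2 + δ) :=
    mul_lt_mul_of_pos_left (by linarith) hδ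
  linarith

/-- for a strictly increasing rate of return, if every player has
`α_i = 1` and `k_i ≥ 1`, then the PNE utilization is non-increasing in the tax
rate: `t_2 < t_1 < t̄` implies `x^{t_1}_NE ≤ x^{t_2}_NE`. -/
theorem statement10 {ι : Type*} [Fintype ι] [DecidableEq ι] [Nonempty ι]
    (p r : ℝ → ℝ) (α k : ι → ℝ)
    (hp : FailureProb p) (hr : RateOfReturn r)
    (hinc : StrictMonoOn r (Icc (0:ℝ) 1))
    (hα : ∀ i, α i = 1) (hk : ∀ i, 1 ≤ k i)
    (t1 t2 : ℝ) (ht2 : 0 ≤ t2) (h21 : t2 < t1) (h1 : t1 < tbar p r α k)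
    (x1 x2 : ι → ℝ)
    (hx1 : IsPNE p r α k t1 x1) (hx2 : IsPNE p r α k t2 x2) :
    ∑ i, x1 i ≤ ∑ i, x2 i := by
  by_contra! hlt
  obtain ⟨i, -, hi⟩ := Finset.exists_lt_of_sum_lt hlt
  have e1 := Finset.add_sum_erase Finset.univ x1 (Finset.mem_univ i)
  have e2 := Finset.add_sum_erase Finset.univ x2 (Finset.mem_univ i)
  have n1 : 0 ≤ ∑ j ∈ Finset.univ.erase i, x1 j := Finset.sum_nonneg fun j _ => (hx1.1 j).1
  have n2 : 0 ≤ ∑ j ∈ Finset.univ.erase i, x2 j := Finset.sum_nonneg fun j _ => (hx2.1 j).1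
  have b1 := hx1.2 i
  have b2 := hx2.2 i
  simp only [hα i, rpow_one] at b1 b2
  rw [e1, eq_sub_of_add_eq' e1] at b1
  rw [e2, eq_sub_of_add_eq' e2] at b2
  exact absurd (utilization_le_of_bestResponse hp hr hinc (hk i) ht2 h21 (hx2.1 i).1 hi (hx1.1 i).2
    (by linarith) (by linarith) b1 b2) (not_le.2 hlt)
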